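/- arXiv:2310.13175 — 10 statements merged into one kernel-verified Lean document; each statement's English description precedes it below -/
import Mathlib

section
/- Let Ω be a linear order and let f, fℓ, fr : Ω → Ω be functions such that (fℓ, f) and (f, fr) are Galois connections. If a ∈ Ω does not lie in the range of f, then fr(a) is covered by fℓ(a) (fr(a) ⋖ fℓ(a)) and f(fr(a)) < a < f(fℓ(a)). -/
section Residuals

variable {α β : Type*}

theorem l_u_lt_of_notMem_range [Preorder α] [PartialOrder β] {l : α → β} {u : β → α}
    (gc : GaloisConnection l u) {b : β} (hb : b ∉ Set.range l) : l (u b) < b :=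
  (gc.l_u_le b).lt_of_ne fun h => hb ⟨u b, h⟩

theorem lt_u_l_of_notMem_range [PartialOrder α] [Preorder β] {l : α → β} {u : β → α}
    (gc : GaloisConnection l u) {a : α} (ha : a ∉ Set.range u) : a < u (l a) :=
  (gc.le_u_l a).lt_of_ne' fun h => ha ⟨l a, h⟩

theorem le_residual_or_dualResidual_le [Preorder α] [LinearOrder β] {f : α → β} {fl fr : β → α}
    (hl : GaloisConnection fl f) (hr : GaloisConnection f fr) (x : α) (b : β) :
    x ≤ fr b ∨ fl b ≤ x :=
  (le_total (f x) b).imp (hr.le_u ·) (hl.l_le ·)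

theorem residual_lt_dualResidual_of_notMem_range [LinearOrder α] [PartialOrder β]
    {f : α → β} {fl fr : β → α} (hl : GaloisConnection fl f) (hr : GaloisConnection f fr)
    {b : β} (hb : b ∉ Set.range f) : fr b < fl b :=
  hl.monotone_u.reflect_lt <|
    (l_u_lt_of_notMem_range hr hb).trans (lt_u_l_of_notMem_range hl hb)

theorem residual_covBy_dualResidual_of_notMem_range [LinearOrder α] [LinearOrder β]
    {f : α → β} {fl fr : β → α} (hl : GaloisConnection fl f) (hr : GaloisConnection f fr)
    {b : β} (hb : b ∉ Set.range f) : fr b ⋖ fl b :=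
  ⟨residual_lt_dualResidual_of_notMem_range hl hr hb, fun x hrx hxl =>
    (le_residual_or_dualResidual_le hl hr x b).elim hrx.not_ge hxl.not_ge⟩

theorem stmt_1_general [LinearOrder α] [LinearOrder β] {f : α → β} {fl fr : β → α}
    (hl : GaloisConnection fl f) (hr : GaloisConnection f fr) {b : β} (hb : b ∉ Set.range f) :
    fr b ⋖ fl b ∧ f (fr b) < b ∧ b < f (fl b) :=
  ⟨residual_covBy_dualResidual_of_notMem_range hl hr hb,
    l_u_lt_of_notMem_range hr hb, lt_u_l_of_notMem_range hl hb⟩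

end Residuals

/-- If `f` has dual residual `fl` and residual `fr` on a linear order, and `a`
is not in the range of `f`, then `fr a ⋖ fl a` and `f (fr a) < a < f (fl a)`. -/
theorem stmt_1 {Ω : Type*} [LinearOrder Ω] (f fl fr : Ω → Ω)
    (hl : GaloisConnection fl f) (hr : GaloisConnection f fr)
    (a : Ω) (ha : a ∉ Set.range f) :
    fr a ⋖ fl a ∧ f (fr a) < a ∧ a < f (fl a) :=
  stmt_1_general hl hr ha
end

section
/- Let Ω be a linear order and f : Ω → Ω. Then f is both residuated and dually residuated if and only if f is monotone and the following two conditions hold: (1) for every a in the range of f there exist b ≤ c in Ω with f⁻¹{a} equal to the closed interval [b, c]; (2) for every a not in the range of f there exist b, c ∈ Ω with b covered by c (b ⋖ c) and f(b) < a < f(c). -/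
/-!
A residual of `f` amounts to the preimage of each `Iic a` being some `Iic c`, a dual residual to the
preimage of each `Ici a` being some `Ici b`. Intersecting, the fibre over `a` is `Icc b c`. If that
fibre is empty, then `Iic c` and `Ici b` are complementary, which forces `c ⋖ b`. Conversely, for
monotone `f` the endpoints of a nonempty fibre over `a`, or a covering pair whose images enclose
`a`, are exactly the endpoints of the two preimages.
-/

open Set

section Preorder

variable {α β : Type*} [Preorder α] [Preorder β] {f : α → β}

theorem exists_galoisConnection_right_iff_forall_preimage_Iic :
    (∃ u, GaloisConnection f u) ↔ ∀ a, ∃ c, f ⁻¹' Iic a = Iic c := by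
  simp only [Set.ext_iff, mem_preimage, mem_Iic, Classical.skolem, GaloisConnection]
  exact exists_congr fun _ => forall_comm

theorem exists_galoisConnection_left_iff_forall_preimage_Ici :
    (∃ l, GaloisConnection l f) ↔ ∀ a, ∃ b, f ⁻¹' Ici a = Ici b := by
  simp only [Set.ext_iff, mem_preimage, mem_Ici, Classical.skolem, GaloisConnection,
    Iff.comm (a := _ ≤ f _)]

end Preorder

section Fibers

variable {α β : Type*} {f : α → β} {a : β} {b c : α}

theorem preimage_singleton_eq_Icc [Preorder α] [PartialOrder β]
    (hb : f ⁻¹' Ici a = Ici b) (hc : f ⁻¹' Iic a = Iic c) : f ⁻¹' {a} = Icc b c := by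
  rw [← Icc_self, ← Ici_inter_Iic, preimage_inter, hb, hc, Ici_inter_Iic]

theorem covBy_of_Iio_eq_Iic [Preorder α] (h : Iio c = Iic b) : b ⋖ c :=
  ⟨h.ge self_mem_Iic, fun _ hbx hxc => hbx.not_ge (h.le hxc)⟩

theorem covBy_of_notMem_range [LinearOrder α] [LinearOrder β] (ha : a ∉ range f)
    (hb : f ⁻¹' Ici a = Ici b) (hc : f ⁻¹' Iic a = Iic c) : c ⋖ b := by
  have preimage_Iio_eq : f ⁻¹' Iio a = f ⁻¹' Iic a :=
    Set.ext fun x => (show f x ≠ a from fun hx => ha ⟨x, hx⟩).le_iff_lt.symm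
  refine covBy_of_Iio_eq_Iic ?_
  calc
    Iio b = (f ⁻¹' Ici a)ᶜ := by rw [hb, compl_Ici]
    _ = f ⁻¹' Iio a := by rw [← preimage_compl, compl_Ici]
    _ = Iic c := preimage_Iio_eq.trans hc

end Fibers

section Monotone

variable {α β : Type*} [LinearOrder α] {f : α → β} {a : β} {b c : α}

theorem preimage_Iic_eq_of_isGreatest_fiber [PartialOrder β] (hf : Monotone f)
    (hc : IsGreatest (f ⁻¹' {a}) c) : f ⁻¹' Iic a = Iic c := by
  obtain ⟨rfl, hmax⟩ := hc
  refine Subset.antisymm (fun x hx => ?_) fun x hx => hf hx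
  exact le_of_not_gt fun hcx => hcx.not_ge (hmax (le_antisymm hx (hf hcx.le)))

theorem preimage_Ici_eq_of_isLeast_fiber [PartialOrder β] (hf : Monotone f)
    (hb : IsLeast (f ⁻¹' {a}) b) : f ⁻¹' Ici a = Ici b :=
  preimage_Iic_eq_of_isGreatest_fiber hf.dual hb.dual

theorem preimage_Iic_eq_of_covBy [Preorder β] (hf : Monotone f) (hbc : b ⋖ c)
    (hb : f b ≤ a) (hc : a < f c) : f ⁻¹' Iic a = Iic b := by
  refine Subset.antisymm (fun x hx => ?_) fun x hx => (hf hx).trans hb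
  rw [← hbc.Iio_eq]
  exact hf.reflect_lt (lt_of_le_of_lt hx hc)

theorem preimage_Ici_eq_of_covBy [Preorder β] (hf : Monotone f) (hbc : b ⋖ c)
    (hb : f b < a) (hc : a ≤ f c) : f ⁻¹' Ici a = Ici c :=
  preimage_Iic_eq_of_covBy hf.dual hbc.toDual hc hb

end Monotone

theorem stmt_2_general {α β : Type*} [LinearOrder α] [LinearOrder β] (f : α → β) :
    ((∃ fr, GaloisConnection f fr) ∧ (∃ fl, GaloisConnection fl f)) ↔
      (Monotone f ∧
        (∀ a ∈ range f, ∃ b c : α, b ≤ c ∧ f ⁻¹' {a} = Icc b c) ∧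
        (∀ a : β, a ∉ range f → ∃ b c : α, b ⋖ c ∧ f b < a ∧ a < f c)) := by
  constructor
  · rintro ⟨⟨fr, hr⟩, ⟨fl, hl⟩⟩
    have preimage_Iic a : f ⁻¹' Iic a = Iic (fr a) := Set.ext fun x => hr x a
    have preimage_Ici a : f ⁻¹' Ici a = Ici (fl a) := Set.ext fun x => (hl a x).symm
    refine ⟨hr.monotone_l, ?_, fun a ha => ?_⟩
    · rintro _ ⟨x, rfl⟩
      exact ⟨_, _, (hl.l_u_le x).trans (hr.le_u_l x),
        preimage_singleton_eq_Icc (preimage_Ici _) (preimage_Iic _)⟩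
    · exact ⟨_, _, covBy_of_notMem_range ha (preimage_Ici a) (preimage_Iic a),
        (hr.l_u_le a).lt_of_ne fun h => ha ⟨_, h⟩,
        (hl.le_u_l a).lt_of_ne fun h => ha ⟨_, h.symm⟩⟩
  · rintro ⟨hf, fiber_eq_Icc, exists_covBy⟩
    rw [exists_galoisConnection_right_iff_forall_preimage_Iic,
      exists_galoisConnection_left_iff_forall_preimage_Ici, ← forall_and]
    intro a
    by_cases ha : a ∈ range f
    · obtain ⟨b, c, hbc, fiber_eq⟩ := fiber_eq_Icc a ha
      exact ⟨⟨c, preimage_Iic_eq_of_isGreatest_fiber hf (fiber_eq ▸ isGreatest_Icc hbc)⟩,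
        ⟨b, preimage_Ici_eq_of_isLeast_fiber hf (fiber_eq ▸ isLeast_Icc hbc)⟩⟩
    · obtain ⟨b, c, hbc, hb, hc⟩ := exists_covBy a ha
      exact ⟨⟨b, preimage_Iic_eq_of_covBy hf hbc hb.le hc⟩,
        ⟨c, preimage_Ici_eq_of_covBy hf hbc hb hc.le⟩⟩

/-- A map on a linear order is residuated and dually residuated iff it is monotone,
preimages of range points are closed intervals, and every non-range point is strictly
between the images of a covering pair. -/
theorem stmt_2 {Ω : Type*} [LinearOrder Ω] (f : Ω → Ω) :
    ((∃ fr, GaloisConnection f fr) ∧ (∃ fl, GaloisConnection fl f)) ↔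
      (Monotone f ∧
        (∀ a ∈ Set.range f, ∃ b c : Ω, b ≤ c ∧ f ⁻¹' {a} = Set.Icc b c) ∧
        (∀ a : Ω, a ∉ Set.range f → ∃ b c : Ω, b ⋖ c ∧ f b < a ∧ a < f c)) :=
  stmt_2_general f
end

section
/- Let Ω be an integral chain and let f, fℓ : Ω → Ω be such that (fℓ, f) is a Galois connection (i.e., f is dually residuated with dual residual fℓ). Then fℓ is itself dually residuated: there exists h : Ω → Ω such that (h, fℓ) is a Galois connection. -/
section

variable {α β : Type*} [LinearOrder α] [LinearOrder β] {l : α → β} {u : β → α}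

/-- Negating both sides of a Galois connection between chains relates strict inequalities in the
opposite direction; passing to covers makes them non-strict again. -/
theorem galoisConnection_comp_of_covBy {s : α → α} {p : β → β} (hs : ∀ a, a ⋖ s a)
    (hp : ∀ b, p b ⋖ b) (gc : GaloisConnection l u) : GaloisConnection (s ∘ u ∘ p) l := fun b a ↦
  calc
    s (u (p b)) ≤ a ↔ u (p b) < a := (hs (u (p b))).le_iff_lt_right
    _ ↔ p b < l a := gc.lt_iff_lt.symm
    _ ↔ b ≤ l a := (hp b).lt_iff_le_right

theorem stmt_3_general (upper_cover : ∀ a : α, ∃ a', a ⋖ a') (lower_cover : ∀ b : β, ∃ b', b' ⋖ b)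
    (gc : GaloisConnection l u) : ∃ h : β → α, GaloisConnection h l := by
  choose s hs using upper_cover
  choose p hp using lower_cover
  exact ⟨s ∘ u ∘ p, galoisConnection_comp_of_covBy hs hp gc⟩

end

/-- On an integral chain (every element has an upper cover and a lower cover),
the dual residual `fl` of a dually residuated map `f` is itself dually residuated. -/
theorem stmt_3 {Ω : Type*} [LinearOrder Ω]
    (hint : ∀ a : Ω, (∃ b, a ⋖ b) ∧ (∃ b, b ⋖ a))
    (f fl : Ω → Ω) (hl : GaloisConnection fl f) :
    ∃ h : Ω → Ω, GaloisConnection h fl :=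
  stmt_3_general (fun a ↦ (hint a).1) (fun a ↦ (hint a).2) hl
end

section
/- Let Ω be an integral chain and f : Ω → Ω. Then f has residuals and dual residuals of all orders — that is, there exists a family g : ℤ → (Ω → Ω) with g(0) = f such that for every n ∈ ℤ the pair (g(n+1), g(n)) is a Galois connection — if and only if f is residuated and dually residuated. -/
/-!
On an integral chain `a < b ↔ succ a ≤ b`, so negating both sides of the adjunction
`l a ≤ b ↔ a ≤ u b` turns it into an adjunction between `succ ∘ u ∘ pred` and `l`. A map `f` with a
dual residual `l` therefore has the adjoints
`…, pred ∘ l ∘ succ, f, l, succ ∘ f ∘ pred, succ ∘ l ∘ pred, …`, and a residual `r` of `f` yields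
the dual residual `succ ∘ r ∘ pred`.
-/

open Order

section OrderIsoConj

variable {α : Type*} [Preorder α]

theorem galoisConnection_conj {β : Type*} [Preorder β] (e : α ≃o β) {l u : α → α}
    (hlu : GaloisConnection l u) :
    GaloisConnection (e.toEquiv.conj l) (e.toEquiv.conj u) :=
  (e.symm.to_galoisConnection.compose hlu).compose e.to_galoisConnection

/-- The bi-infinite sequence `…, f, l, τ f τ⁻¹, τ l τ⁻¹, τ² f τ⁻², …` with `f` at index `0`, whose
consecutive terms are adjoint as soon as the first three displayed ones are. The floor division
`n / 2` counts the conjugations by `τ`, also for negative `n`. -/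
def conjSeq (τ : α ≃o α) (f l : α → α) (n : ℤ) : α → α :=
  (τ ^ (n / 2)).toEquiv.conj (if Even n then f else l)

variable (τ : α ≃o α) (f l : α → α)

theorem conjSeq_two_mul (k : ℤ) : conjSeq τ f l (2 * k) = (τ ^ k).toEquiv.conj f := by
  simp [conjSeq]

theorem conjSeq_two_mul_add_one (k : ℤ) :
    conjSeq τ f l (2 * k + 1) = (τ ^ k).toEquiv.conj l := by
  have half : (2 * k + 1) / 2 = k := by lia
  simp [conjSeq, half]

theorem conjSeq_zero : conjSeq τ f l 0 = f :=
  conjSeq_two_mul τ f l 0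

theorem conjSeq_two_mul_add_two (k : ℤ) :
    conjSeq τ f l (2 * k + 1 + 1) = (τ ^ k).toEquiv.conj (τ.toEquiv.conj f) := by
  rw [show 2 * k + 1 + 1 = 2 * (k + 1) by ring, conjSeq_two_mul, zpow_add_one]
  rfl

variable {τ f l}

theorem galoisConnection_conjSeq (hlf : GaloisConnection l f)
    (hfl : GaloisConnection (τ.toEquiv.conj f) l) (n : ℤ) :
    GaloisConnection (conjSeq τ f l (n + 1)) (conjSeq τ f l n) := by
  obtain ⟨k, rfl | rfl⟩ := n.even_or_odd'
  · rw [conjSeq_two_mul_add_one, conjSeq_two_mul]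
    exact galoisConnection_conj _ hlf
  · rw [conjSeq_two_mul_add_two, conjSeq_two_mul_add_one]
    exact galoisConnection_conj _ hfl

end OrderIsoConj

section SuccPred

/-- The successor map as an order automorphism, with inverse the predecessor map. Adjoints two
steps apart differ by conjugation with it. -/
def succOrderIso (α : Type*) [PartialOrder α] [SuccOrder α] [PredOrder α] [NoMaxOrder α]
    [NoMinOrder α] : α ≃o α :=
  Equiv.toOrderIso ⟨succ, pred, pred_succ, succ_pred⟩ succ_mono pred_mono

variable {α : Type*} [LinearOrder α]

theorem galoisConnection_succ_comp_comp_pred {β : Type*} [LinearOrder β] [SuccOrder α]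
    [NoMaxOrder α] [PredOrder β] [NoMinOrder β] {l : α → β} {u : β → α}
    (hlu : GaloisConnection l u) : GaloisConnection (succ ∘ u ∘ pred) l := fun b a =>
  calc succ (u (pred b)) ≤ a ↔ u (pred b) < a := succ_le_iff
    _ ↔ pred b < l a := hlu.lt_iff_lt.symm
    _ ↔ b ≤ l a := pred_lt_iff

theorem nonempty_succOrder_of_forall_exists_covBy (hcov : ∀ a : α, ∃ b, a ⋖ b) :
    Nonempty (SuccOrder α) := by
  choose s hs using hcov
  exact ⟨.ofSuccLeIff s ⟨(hs _).lt.trans_le, (hs _).ge_of_gt⟩⟩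

theorem nonempty_predOrder_of_forall_exists_covBy (hcov : ∀ a : α, ∃ b, b ⋖ a) :
    Nonempty (PredOrder α) := by
  choose p hp using hcov
  exact ⟨.ofPredLeIff p ⟨fun h => h.trans_lt (hp _).lt, (hp _).le_of_lt⟩⟩

end SuccPred

theorem stmt_4_general {Ω : Type*} [LinearOrder Ω]
    (hint : ∀ a : Ω, (∃ b, a ⋖ b) ∧ (∃ b, b ⋖ a)) (f : Ω → Ω) :
    List.TFAE [
      ∃ g : ℤ → Ω → Ω, g 0 = f ∧ ∀ n : ℤ, GaloisConnection (g (n + 1)) (g n),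
      ∃ fr, GaloisConnection f fr,
      ∃ fl, GaloisConnection fl f] := by
  obtain ⟨_⟩ := nonempty_succOrder_of_forall_exists_covBy fun a => (hint a).1
  obtain ⟨_⟩ := nonempty_predOrder_of_forall_exists_covBy fun a => (hint a).2
  have : NoMaxOrder Ω := ⟨fun a => (hint a).1.imp fun _ h => h.lt⟩
  have : NoMinOrder Ω := ⟨fun a => (hint a).2.imp fun _ h => h.lt⟩
  tfae_have 1 → 2 := by
    rintro ⟨g, rfl, hg⟩
    exact ⟨g (-1), by simpa using hg (-1)⟩
  tfae_have 2 → 3 := fun ⟨r, hr⟩ => ⟨succ ∘ r ∘ pred, galoisConnection_succ_comp_comp_pred hr⟩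
  tfae_have 3 → 1 := fun ⟨l, hl⟩ => ⟨conjSeq (succOrderIso Ω) f l, conjSeq_zero _ f l,
    galoisConnection_conjSeq hl (galoisConnection_succ_comp_comp_pred hl)⟩
  tfae_finish

/-- On an integral chain, a map has residuals and dual residuals of all orders
iff it is residuated and dually residuated. -/
theorem stmt_4 {Ω : Type*} [LinearOrder Ω]
    (hint : ∀ a : Ω, (∃ b, a ⋖ b) ∧ (∃ b, b ⋖ a)) (f : Ω → Ω) :
    (∃ g : ℤ → Ω → Ω, g 0 = f ∧ ∀ n : ℤ, GaloisConnection (g (n + 1)) (g n)) ↔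
      ((∃ fr, GaloisConnection f fr) ∧ (∃ fl, GaloisConnection fl f)) :=
  have tfae := stmt_4_general hint f
  ⟨fun hg => ⟨(tfae.out 0 1).1 hg, (tfae.out 0 2).1 hg⟩, fun h => (tfae.out 0 2).2 h.2⟩
end

section
/- Let Ω be an integral chain and f : Ω → Ω. Then f has residuals and dual residuals of all orders (f ∈ F(Ω)) if and only if f is monotone and: (1) for every a in the range of f there exist b ≤ c in Ω with f⁻¹{a} = [b, c]; (2) for every a not in the range of f there exist b, c ∈ Ω with b covered by c and f(b) < a < f(c). -/
/-!
A map `f` with a left adjoint `l` and a right adjoint `r` has fibres `[l a, r a]`, and over a point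
`a` outside its range `f x < a ↔ f x ≤ a` says that `l a` covers `r a`. Conversely, conditions (1)
and (2) give each set `{x | a ≤ f x}` a least element, so a monotone `f` has a left adjoint.

On an integral chain one adjunction produces all others: since `x < y ↔ succ x ≤ y ↔ x ≤ pred y`,
negating `l y ≤ x ↔ y ≤ f x` yields the adjunction `succ ∘ f ∘ pred ⊣ l`. The passage from `l ⊣ f`
to `succ ∘ f ∘ pred ⊣ l` is invertible, and its integer iterates form the required family.
-/

open Order

section AdjointTriple

variable {α β : Type*} {l r : β → α} {f : α → β} {a : β}

theorem preimage_singleton_eq_Icc_of_gc [Preorder α] [PartialOrder β]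
    (hl : GaloisConnection l f) (hr : GaloisConnection f r) :
    f ⁻¹' {a} = Set.Icc (l a) (r a) := by
  ext x
  calc f x = a ↔ a ≤ f x ∧ f x ≤ a := by rw [le_antisymm_iff, and_comm]
    _ ↔ l a ≤ x ∧ x ≤ r a := and_congr (hl a x).symm (hr x a)

theorem covBy_of_gc_of_notMem_range [LinearOrder α] [LinearOrder β]
    (hl : GaloisConnection l f) (hr : GaloisConnection f r) (ha : a ∉ Set.range f) :
    r a ⋖ l a := by
  refine covBy_iff_lt_iff_le_left.2 fun {x} ↦ ?_
  have hx : f x ≠ a := fun h ↦ ha ⟨x, h⟩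
  calc x < l a ↔ f x < a := hl.lt_iff_lt
    _ ↔ f x ≤ a := hx.le_iff_lt.symm
    _ ↔ x ≤ r a := hr x a

end AdjointTriple

section LeftAdjoint

variable {α β : Type*} {f : α → β} {a : β} {b c : α}

theorem exists_gc_of_forall_exists_isLeast [Preorder α] [Preorder β] (hf : Monotone f)
    (h : ∀ a, ∃ b, IsLeast {x | a ≤ f x} b) : ∃ l, GaloisConnection l f := by
  choose l hl using h
  exact ⟨l, fun a x ↦ ⟨fun hx ↦ (hl a).1.trans (hf hx), fun hx ↦ (hl a).2 hx⟩⟩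

theorem isLeast_le_of_isLeast_preimage_singleton [LinearOrder α] [PartialOrder β]
    (hf : Monotone f) (hb : IsLeast (f ⁻¹' {a}) b) : IsLeast {x | a ≤ f x} b := by
  have hfb : f b = a := hb.1
  refine ⟨hfb.ge, fun x hx ↦ le_of_not_gt fun hxb ↦ ?_⟩
  have hfx : f x = a := le_antisymm ((hf hxb.le).trans_eq hfb) hx
  exact (hb.2 hfx).not_gt hxb

theorem isLeast_le_of_covBy [LinearOrder α] [Preorder β]
    (hf : Monotone f) (hbc : b ⋖ c) (hb : f b < a) (hc : a ≤ f c) :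
    IsLeast {x | a ≤ f x} c :=
  ⟨hc, fun _ hx ↦ hbc.ge_of_gt <| lt_of_not_ge fun hxb ↦ (hx.trans (hf hxb)).not_gt hb⟩

theorem exists_gc_of_isLeast_fibre_of_covBy [LinearOrder α] [PartialOrder β] (hf : Monotone f)
    (hfibre : ∀ a ∈ Set.range f, ∃ b, IsLeast (f ⁻¹' {a}) b)
    (hgap : ∀ a ∉ Set.range f, ∃ b c, b ⋖ c ∧ f b < a ∧ a ≤ f c) :
    ∃ l, GaloisConnection l f := by
  refine exists_gc_of_forall_exists_isLeast hf fun a ↦ ?_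
  by_cases ha : a ∈ Set.range f
  · obtain ⟨b, hb⟩ := hfibre a ha
    exact ⟨b, isLeast_le_of_isLeast_preimage_singleton hf hb⟩
  · obtain ⟨b, c, hbc, hb, hc⟩ := hgap a ha
    exact ⟨c, isLeast_le_of_covBy hf hbc hb hc⟩

end LeftAdjoint

section SuccPred

theorem nonempty_succOrder_of_exists_covBy {α : Type*} [LinearOrder α] (h : ∀ a : α, ∃ b, a ⋖ b) :
    Nonempty (SuccOrder α) := by
  choose succ hsucc using h
  exact ⟨.ofSuccLeIff succ fun {a _} ↦ ⟨(hsucc a).lt.trans_le, (hsucc a).ge_of_gt⟩⟩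

theorem nonempty_predOrder_of_exists_covBy {α : Type*} [LinearOrder α] (h : ∀ a : α, ∃ b, b ⋖ a) :
    Nonempty (PredOrder α) := by
  choose pred hpred using h
  exact ⟨.ofPredLeIff pred fun {b _} ↦ ⟨fun hab ↦ hab.trans_lt (hpred b).lt, (hpred b).le_of_lt⟩⟩

variable {α β : Type*} [LinearOrder α] [LinearOrder β] {l : β → α} {f : α → β}

theorem gc_succ_comp_pred [PredOrder α] [NoMinOrder α] [SuccOrder β] [NoMaxOrder β]
    (h : GaloisConnection l f) : GaloisConnection (succ ∘ f ∘ pred) l := fun x y ↦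
  calc succ (f (pred x)) ≤ y ↔ f (pred x) < y := succ_le_iff
    _ ↔ pred x < l y := h.lt_iff_lt.symm
    _ ↔ x ≤ l y := pred_lt_iff

theorem gc_pred_comp_succ [SuccOrder β] [NoMaxOrder β] [PredOrder α] [NoMinOrder α]
    (h : GaloisConnection l f) : GaloisConnection f (pred ∘ l ∘ succ) := fun x y ↦
  calc f x ≤ y ↔ f x < succ y := lt_succ_iff.symm
    _ ↔ x < l (succ y) := h.lt_iff_lt.symm
    _ ↔ x ≤ pred (l (succ y)) := le_pred_iff.symm

end SuccPred

section IntegralChain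

variable {Ω : Type*} [LinearOrder Ω] [SuccOrder Ω] [PredOrder Ω] [NoMaxOrder Ω] [NoMinOrder Ω]

/-- The shift `(l, f) ↦ (succ ∘ f ∘ pred, l)` on adjoint pairs `l ⊣ f` of self-maps of an integral
chain. It makes the old left adjoint the new right adjoint, so that iterating it, forwards and
backwards, runs through the residuals of all orders. -/
def adjointShift :
    Equiv.Perm {p : (Ω → Ω) × (Ω → Ω) // GaloisConnection p.1 p.2} where
  toFun p := ⟨(succ ∘ p.1.2 ∘ pred, p.1.1), gc_succ_comp_pred p.2⟩
  invFun p := ⟨(p.1.2, pred ∘ p.1.1 ∘ succ), gc_pred_comp_succ p.2⟩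
  left_inv p := by ext <;> simp
  right_inv p := by ext <;> simp

theorem exists_int_family_gc {l f : Ω → Ω} (h : GaloisConnection l f) :
    ∃ g : ℤ → Ω → Ω, g 0 = f ∧ ∀ n : ℤ, GaloisConnection (g (n + 1)) (g n) := by
  let p (n : ℤ) := (adjointShift ^ n) ⟨(l, f), h⟩
  have p_succ (n : ℤ) : p (n + 1) = adjointShift (p n) := by
    simp only [p, add_comm n 1, zpow_one_add, Equiv.Perm.mul_apply]
  refine ⟨fun n ↦ (p n).1.2, rfl, fun n ↦ ?_⟩
  change GaloisConnection (p (n + 1)).1.2 (p n).1.2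
  rw [p_succ]
  exact (p n).2

end IntegralChain

/-- On an integral chain, `f ∈ F(Ω)` iff `f` is monotone, preimages of range points
are closed intervals, and every non-range point lies strictly between the images of
a covering pair. -/
theorem stmt_5 {Ω : Type*} [LinearOrder Ω]
    (hint : ∀ a : Ω, (∃ b, a ⋖ b) ∧ (∃ b, b ⋖ a)) (f : Ω → Ω) :
    (∃ g : ℤ → Ω → Ω, g 0 = f ∧ ∀ n : ℤ, GaloisConnection (g (n + 1)) (g n)) ↔
      (Monotone f ∧
        (∀ a ∈ Set.range f, ∃ b c : Ω, b ≤ c ∧ f ⁻¹' {a} = Set.Icc b c) ∧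
        (∀ a : Ω, a ∉ Set.range f → ∃ b c : Ω, b ⋖ c ∧ f b < a ∧ a < f c)) := by
  constructor
  · rintro ⟨g, rfl, hg⟩
    have hl : GaloisConnection (g 1) (g 0) := hg 0
    have hr : GaloisConnection (g 0) (g (-1)) := by simpa using hg (-1)
    refine ⟨hl.monotone_u, fun a ⟨x, hx⟩ ↦ ?_, fun a ha ↦ ?_⟩
    · have fibre := preimage_singleton_eq_Icc_of_gc (a := a) hl hr
      have hx_mem : x ∈ Set.Icc (g 1 a) (g (-1) a) := fibre ▸ hx
      exact ⟨g 1 a, g (-1) a, hx_mem.1.trans hx_mem.2, fibre⟩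
    · have hne (x : Ω) : g 0 x ≠ a := fun hx ↦ ha ⟨x, hx⟩
      exact ⟨g (-1) a, g 1 a, covBy_of_gc_of_notMem_range hl hr ha,
        (hr.l_u_le a).lt_of_ne (hne _), (hl.le_u_l a).lt_of_ne (hne _).symm⟩
  · rintro ⟨hf, hfibre, hgap⟩
    obtain ⟨_⟩ := nonempty_succOrder_of_exists_covBy fun a ↦ (hint a).1
    obtain ⟨_⟩ := nonempty_predOrder_of_exists_covBy fun a ↦ (hint a).2
    have : NoMaxOrder Ω := ⟨fun a ↦ (hint a).1.imp fun _ ↦ CovBy.lt⟩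
    have : NoMinOrder Ω := ⟨fun a ↦ (hint a).2.imp fun _ ↦ CovBy.lt⟩
    obtain ⟨l, hl⟩ := exists_gc_of_isLeast_fibre_of_covBy hf
      (fun a ha ↦ have ⟨b, _, hbc, fibre⟩ := hfibre a ha; ⟨b, fibre ▸ isLeast_Icc hbc⟩)
      (fun a ha ↦ have ⟨b, c, hbc, hb, hc⟩ := hgap a ha; ⟨b, c, hbc, hb, hc.le⟩)
    exact exists_int_family_gc hl
end

section
/- Let Ω be a linear order and let g : ℤ → (Ω → Ω) be a family such that (g(n+1), g(n)) is a Galois connection for every n ∈ ℤ; write f = g(0), fℓ = g(1) and fr = g(−1) (so f ∈ F(Ω)). If a ∈ Ω is such that f⁻¹{a} contains at least two distinct elements, then: fℓ(a) is not the least upper bound of {b : b < fℓ(a)}; fr(a) is not the greatest lower bound of {b : fr(a) < b}; a is not the least upper bound of {b : b < a}; and a is not the greatest lower bound of {b : a < b}. -/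
/-!
For adjoints `l ⊣ f ⊣ r`, the fiber of `f` over `a` lies in the interval `[l a, r a]`, so two
distinct points in it force `l a < r a`. If `a` were the supremum of the elements below it,
then `r`, being itself a left adjoint, would preserve this supremum; but `b < a` implies
`r b ≤ l a`, so `r a ≤ l a`. If `l a` were the supremum of the elements below it, then `f` would
carry this over to `a`. The statements about infima are dual.
-/

open Set

section Adjoints

variable {α β : Type*} {l r : β → α} {f : α → β} {a : β}

theorem fiber_subset_Icc [Preorder α] [Preorder β] (hlf : GaloisConnection l f)
    (hfr : GaloisConnection f r) : f ⁻¹' {a} ⊆ Icc (l a) (r a) := by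
  rintro x rfl
  exact ⟨hlf.l_u_le x, hfr.le_u_l x⟩

theorem left_lt_right_of_nontrivial_fiber [PartialOrder α] [Preorder β]
    (hlf : GaloisConnection l f) (hfr : GaloisConnection f r) (ha : (f ⁻¹' {a}).Nontrivial) :
    l a < r a := by
  have fiber_subset : f ⁻¹' {a} ⊆ Icc (l a) (r a) := fiber_subset_Icc hlf hfr
  obtain ⟨x, hx⟩ := ha.nonempty
  refine ((fiber_subset hx).1.trans (fiber_subset hx).2).lt_of_ne fun heq ↦ ?_
  exact (ha.mono fiber_subset).not_subsingleton (subsingleton_Icc_of_ge heq.ge)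

theorem right_le_left_of_isLUB_Iio [LinearOrder α] [Preorder β] {r₂ : α → β}
    (hlf : GaloisConnection l f) (hfr : GaloisConnection f r) (hr : GaloisConnection r r₂)
    (ha : IsLUB (Iio a) a) : r a ≤ l a := by
  refine (hr.isLUB_l_image ha).2 (forall_mem_image.2 fun b hb ↦ ?_)
  by_contra! hlt
  have a_le_b : a ≤ b := (hlf.le_u hlt.le).trans (hfr.l_u_le b)
  exact a_le_b.not_gt hb

theorem right_le_left_of_isGLB_Ioi [LinearOrder α] [Preorder β] {l₂ : α → β}
    (hl : GaloisConnection l₂ l) (hlf : GaloisConnection l f) (hfr : GaloisConnection f r)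
    (ha : IsGLB (Ioi a) a) : r a ≤ l a :=
  right_le_left_of_isLUB_Iio (α := αᵒᵈ) (β := βᵒᵈ) hfr.dual hlf.dual hl.dual ha.dual

theorem isLUB_Iio_of_isLUB_Iio_left [Preorder α] [Preorder β] (hlf : GaloisConnection l f)
    (hfr : GaloisConnection f r) (hle : l a ≤ r a) (ha : IsLUB (Iio (l a)) (l a)) :
    IsLUB (Iio a) a := by
  refine ⟨fun b hb ↦ hb.le, fun c hc ↦ ?_⟩
  have map_lt : ∀ b < l a, f b < a := fun b hb ↦
    lt_of_le_not_ge (hfr.l_le (hb.le.trans hle)) fun h ↦ (hlf.l_le h).not_gt hb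
  calc
    a ≤ f (l a) := hlf.le_u_l a
    _ ≤ c := (hfr.isLUB_l_image ha).2 (forall_mem_image.2 fun b hb ↦ hc (map_lt b hb))

theorem isGLB_Ioi_of_isGLB_Ioi_right [Preorder α] [Preorder β] (hlf : GaloisConnection l f)
    (hfr : GaloisConnection f r) (hle : l a ≤ r a) (ha : IsGLB (Ioi (r a)) (r a)) :
    IsGLB (Ioi a) a :=
  isLUB_Iio_of_isLUB_Iio_left (α := αᵒᵈ) (β := βᵒᵈ) hfr.dual hlf.dual hle ha.dual

theorem stmt_10_general [LinearOrder α] [Preorder β] {l₂ r₂ : α → β}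
    (hl : GaloisConnection l₂ l) (hlf : GaloisConnection l f) (hfr : GaloisConnection f r)
    (hr : GaloisConnection r r₂) (ha : (f ⁻¹' {a}).Nontrivial) :
    ¬ IsLUB (Iio (l a)) (l a) ∧ ¬ IsGLB (Ioi (r a)) (r a) ∧
      ¬ IsLUB (Iio a) a ∧ ¬ IsGLB (Ioi a) a := by
  have hlt : l a < r a := left_lt_right_of_nontrivial_fiber hlf hfr ha
  have not_isLUB : ¬ IsLUB (Iio a) a := fun h ↦
    (right_le_left_of_isLUB_Iio hlf hfr hr h).not_gt hlt
  have not_isGLB : ¬ IsGLB (Ioi a) a := fun h ↦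
    (right_le_left_of_isGLB_Ioi hl hlf hfr h).not_gt hlt
  exact ⟨fun h ↦ not_isLUB (isLUB_Iio_of_isLUB_Iio_left hlf hfr hlt.le h),
    fun h ↦ not_isGLB (isGLB_Ioi_of_isGLB_Ioi_right hlf hfr hlt.le h), not_isLUB, not_isGLB⟩

end Adjoints

/-- If `f = g 0 ∈ F(Ω)` with dual residual `fl = g 1` and residual `fr = g (-1)`,
and `f⁻¹{a}` has at least two elements, then `fl a` is not a limit point from below,
`fr a` is not a limit point from above, and `a` is not a limit point. -/
theorem stmt_10 {Ω : Type*} [LinearOrder Ω] (g : ℤ → Ω → Ω)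
    (hg : ∀ n : ℤ, GaloisConnection (g (n + 1)) (g n)) (a : Ω)
    (h2 : ∃ x y : Ω, x ≠ y ∧ g 0 x = a ∧ g 0 y = a) :
    ¬ IsLUB {b : Ω | b < g 1 a} (g 1 a) ∧
    ¬ IsGLB {b : Ω | g (-1) a < b} (g (-1) a) ∧
    ¬ IsLUB {b : Ω | b < a} a ∧
    ¬ IsGLB {b : Ω | a < b} a := by
  obtain ⟨x, y, hxy, hx, hy⟩ := h2
  have hfr : GaloisConnection (g 0) (g (-1)) := by simpa using hg (-1)
  have hr : GaloisConnection (g (-1)) (g (-2)) := by simpa using hg (-2)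
  exact stmt_10_general (hg 1) (hg 0) hfr hr ⟨x, hx, y, hy, hxy⟩
end

section
/- For every linear order Ω there exist an integral chain Ω′, an order embedding ι : Ω → Ω′, and a map Φ : (Ω → Ω) → (Ω′ → Ω′) such that for all f, h ∈ F(Ω): (i) Φ(f) ∈ F(Ω′); (ii) Φ(f) ∘ ι = ι ∘ f (so Φ(f) extends f along ι, and in particular Φ is injective on F(Ω)); (iii) Φ(f ∘ h) = Φ(f) ∘ Φ(h); (iv) Φ of the pointwise maximum of f and h equals the pointwise maximum of Φ(f) and Φ(h), and likewise for pointwise minimum; (v) Φ of the identity is the identity; (vi) if (h, f) is a Galois connection then (Φ(h), Φ(f)) is a Galois connection. -/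
universe u

/-- A chain is integral if every element has an upper cover and a lower cover. -/
def IsIntegralChain (α : Type*) [LinearOrder α] : Prop :=
  ∀ a : α, (∃ b, a ⋖ b) ∧ (∃ b, b ⋖ a)

/-- `f ∈ F(α)`: `f` has residuals and dual residuals of all orders. -/
def InFF {α : Type*} [LinearOrder α] (f : α → α) : Prop :=
  ∃ g : ℤ → α → α, g 0 = f ∧ ∀ n : ℤ, GaloisConnection (g (n + 1)) (g n)

/-- The properties of the embedding `Φ : F(Ω) → F(Ω')` along `ι : Ω ↪o Ω'`. -/
def GoodExtension (Ω : Type u) [LinearOrder Ω] (Ω' : Type u) [LinearOrder Ω']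
    (ι : Ω ↪o Ω') (Φ : (Ω → Ω) → Ω' → Ω') : Prop :=
  ∀ f h : Ω → Ω, InFF f → InFF h →
    InFF (Φ f) ∧
    (∀ x : Ω, Φ f (ι x) = ι (f x)) ∧
    Φ (f ∘ h) = Φ f ∘ Φ h ∧
    Φ (fun x => max (f x) (h x)) = (fun x => max (Φ f x) (Φ h x)) ∧
    Φ (fun x => min (f x) (h x)) = (fun x => min (Φ f x) (Φ h x)) ∧
    Φ id = id ∧
    (GaloisConnection h f → GaloisConnection (Φ h) (Φ f))

/-!
Call a point of a chain integral if it lies in a set closed under passing to an upper cover and to a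
lower cover; each point of such a set lies in a copy of `ℤ` inside the chain. For consecutive
adjoints `p ⊣ q ⊣ r`, a cover `x ⋖ y` is sent to a cover `r x ⋖ p y`, so iterating adjoints shows
that members of `F(Ω)` preserve integral points. The same computation shows that if `f ∈ F(Ω)` takes
a value `a` twice, then `a` is integral. Hence, when `h ⊣ f`, the inequalities `h a ≤ b` and
`a ≤ f b` can differ in strictness only if the points where equality holds are integral.
Replacing each non-integral point of `Ω` by a copy of `ℤ` therefore gives an integral chain on which
`F(Ω)` acts through the points, keeping the `ℤ`-coordinate wherever the image point has one.
-/

section Covers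

variable {α β : Type*} [LinearOrder α] [LinearOrder β] {p r : α → β} {q : β → α} {x y : α}

theorem u_covBy_l_iff (hpq : GaloisConnection p q) (hqr : GaloisConnection q r) :
    r x ⋖ p y ↔ ∀ z, q z < y ↔ q z ≤ x := by
  simp only [covBy_iff_lt_iff_le_left, hpq.lt_iff_lt, hqr.le_iff_le]

theorem u_covBy_l_of_covBy (hpq : GaloisConnection p q) (hqr : GaloisConnection q r)
    (hxy : x ⋖ y) : r x ⋖ p y :=
  (u_covBy_l_iff hpq hqr).2 fun _ => hxy.lt_iff_le_left

theorem u_covBy_l_of_u_eq (hpq : GaloisConnection p q) (hqr : GaloisConnection q r)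
    (hxy : x < y) (heq : r x = r y) : r x ⋖ p y := by
  refine (u_covBy_l_iff hpq hqr).2 fun z => ⟨fun hz => ?_, fun hz => hz.trans_lt hxy⟩
  rw [hqr.le_iff_le, heq, ← hqr.le_iff_le]
  exact hz.le

theorem u_covBy_l_of_l_eq (hpq : GaloisConnection p q) (hqr : GaloisConnection q r)
    (hxy : x < y) (heq : p x = p y) : r x ⋖ p y := by
  refine (u_covBy_l_iff hpq hqr).2 fun z => ⟨fun hz => ?_, fun hz => hz.trans_lt hxy⟩
  rw [← hpq.lt_iff_lt, ← heq, hpq.lt_iff_lt] at hz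
  exact hz.le

end Covers

section Adjoints

variable {α : Type*} [LinearOrder α] {f : α → α}

theorem InFF.of_galoisConnection {g : ℤ → α → α}
    (hg : ∀ n, GaloisConnection (g (n + 1)) (g n)) (k : ℤ) : InFF (g k) :=
  ⟨fun n => g (n + k), by simp only [zero_add], fun n => by
    simpa only [add_right_comm] using hg (n + k)⟩

theorem InFF.exists_lowerAdjoint (hf : InFF f) : ∃ l, InFF l ∧ GaloisConnection l f := by
  obtain ⟨g, rfl, hg⟩ := hf
  exact ⟨g 1, .of_galoisConnection hg 1, hg 0⟩

theorem InFF.exists_upperAdjoint (hf : InFF f) : ∃ u, InFF u ∧ GaloisConnection f u := by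
  obtain ⟨g, rfl, hg⟩ := hf
  exact ⟨g (-1), .of_galoisConnection hg (-1), by simpa using hg (-1)⟩

end Adjoints

section IntegralPoints

variable {α : Type*} [LinearOrder α] {f h : α → α} {a b x y : α}

/-- A set of points of a chain each of which has an upper cover and a lower cover in the set, the
covers being taken in the ambient chain. -/
def IsCoverClosed (S : Set α) : Prop :=
  ∀ a ∈ S, (∃ b ∈ S, a ⋖ b) ∧ ∃ b ∈ S, b ⋖ a

/-- A point lying in an interval order-isomorphic to `ℤ`. It is encoded coinductively, as a point
of some cover-closed set, so that integrality is shown without building a `ℤ`-indexed sequence. -/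
def IsIntegralPoint (a : α) : Prop :=
  ∃ S : Set α, a ∈ S ∧ IsCoverClosed S

theorem IsCoverClosed.isIntegralPoint {S : Set α} (hS : IsCoverClosed S) (ha : a ∈ S) :
    IsIntegralPoint a :=
  ⟨S, ha, hS⟩

theorem IsIntegralPoint.exists_upperCover (ha : IsIntegralPoint a) :
    ∃ b, IsIntegralPoint b ∧ a ⋖ b := by
  obtain ⟨S, haS, hS⟩ := ha
  obtain ⟨b, hbS, hab⟩ := (hS a haS).1
  exact ⟨b, hS.isIntegralPoint hbS, hab⟩

theorem IsIntegralPoint.exists_lowerCover (ha : IsIntegralPoint a) :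
    ∃ b, IsIntegralPoint b ∧ b ⋖ a := by
  obtain ⟨S, haS, hS⟩ := ha
  obtain ⟨b, hbS, hba⟩ := (hS a haS).2
  exact ⟨b, hS.isIntegralPoint hbS, hba⟩

theorem isCoverClosed_image_isIntegralPoint :
    IsCoverClosed {b : α | ∃ f, InFF f ∧ ∃ a, IsIntegralPoint a ∧ f a = b} := by
  rintro _ ⟨f, hf, a, ha, rfl⟩
  constructor
  · obtain ⟨l, hl, hlf⟩ := hf.exists_lowerAdjoint
    obtain ⟨ll, hll, hlll⟩ := hl.exists_lowerAdjoint
    obtain ⟨b, hb, hab⟩ := ha.exists_upperCover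
    exact ⟨ll b, ⟨ll, hll, b, hb, rfl⟩, u_covBy_l_of_covBy hlll hlf hab⟩
  · obtain ⟨u, hu, hfu⟩ := hf.exists_upperAdjoint
    obtain ⟨uu, huu, huuu⟩ := hu.exists_upperAdjoint
    obtain ⟨b, hb, hba⟩ := ha.exists_lowerCover
    exact ⟨uu b, ⟨uu, huu, b, hb, rfl⟩, u_covBy_l_of_covBy hfu huuu hba⟩

theorem InFF.isIntegralPoint_map (hf : InFF f) (ha : IsIntegralPoint a) :
    IsIntegralPoint (f a) :=
  isCoverClosed_image_isIntegralPoint.isIntegralPoint ⟨f, hf, a, ha, rfl⟩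

theorem isCoverClosed_repeated_values :
    IsCoverClosed {a : α | ∃ f, InFF f ∧ ∃ x y, x < y ∧ f x = a ∧ f y = a} := by
  rintro a ⟨f, hf, x, y, hxy, hx, hy⟩
  constructor
  · obtain ⟨l, hl, hlf⟩ := hf.exists_lowerAdjoint
    obtain ⟨ll, hll, hlll⟩ := hl.exists_lowerAdjoint
    have hcov : a ⋖ ll y := hx ▸ u_covBy_l_of_u_eq hlll hlf hxy (hx.trans hy.symm)
    have hlt : y < l (ll y) := hlf.lt_iff_lt.2 (hy ▸ hcov.lt)
    exact ⟨ll y, ⟨ll, hll, y, l (ll y), hlt, rfl, hlll.l_u_l_eq_l y⟩, hcov⟩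
  · obtain ⟨u, hu, hfu⟩ := hf.exists_upperAdjoint
    obtain ⟨uu, huu, huuu⟩ := hu.exists_upperAdjoint
    have hcov : uu x ⋖ a := hy ▸ u_covBy_l_of_l_eq hfu huuu hxy (hx.trans hy.symm)
    have hlt : u (uu x) < x := hfu.lt_iff_lt.1 (hx ▸ hcov.lt)
    exact ⟨uu x, ⟨uu, huu, u (uu x), x, hlt, huuu.u_l_u_eq_u x, rfl⟩, hcov⟩

theorem InFF.isIntegralPoint_of_eq (hf : InFF f) (hxy : x < y) (heq : f x = f y) :
    IsIntegralPoint (f x) :=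
  isCoverClosed_repeated_values.isIntegralPoint ⟨f, hf, x, y, hxy, rfl, heq.symm⟩

theorem isIntegralPoint_u (hf : InFF f) (hhf : GaloisConnection h f)
    (hb : h (f b) = b → IsIntegralPoint b) : IsIntegralPoint (f b) := by
  rcases (hhf.l_u_le b).eq_or_lt with heq | hlt
  · exact hf.isIntegralPoint_map (hb heq)
  · exact hhf.u_l_u_eq_u b ▸ hf.isIntegralPoint_of_eq hlt (hhf.u_l_u_eq_u b)

theorem isIntegralPoint_l (hh : InFF h) (hhf : GaloisConnection h f)
    (ha : a = f (h a) → IsIntegralPoint a) : IsIntegralPoint (h a) := by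
  rcases (hhf.le_u_l a).eq_or_lt with heq | hlt
  · exact hh.isIntegralPoint_map (ha heq)
  · exact hh.isIntegralPoint_of_eq hlt (hhf.l_u_l_eq_l a).symm

end IntegralPoints

/-- The chain obtained from `α` by replacing each non-integral point by a copy of `ℤ`. It is
encoded inside the lexicographic product, with `0` as the only level over an integral point. -/
abbrev IntegralExtension (α : Type u) [LinearOrder α] : Type u :=
  {p : α ×ₗ ℤ // IsIntegralPoint (ofLex p).1 → (ofLex p).2 = 0}

namespace IntegralExtension

variable {α : Type u} [LinearOrder α] {f h : α → α} {a b : α} {m n : ℤ}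

open Classical in
/-- The point at level `n` over `a`; over an integral point all levels are identified with `0`. -/
noncomputable def layer (n : ℤ) (a : α) : IntegralExtension α :=
  ⟨toLex (a, if IsIntegralPoint a then 0 else n), fun ha => if_pos ha⟩

theorem layer_snd_fst (p : IntegralExtension α) : layer (ofLex p.1).2 (ofLex p.1).1 = p := by
  classical
  refine Subtype.ext (congrArg toLex (Prod.ext rfl ?_))
  exact ite_eq_right_iff.2 fun hp => (p.2 hp).symm

theorem exists_layer_eq (p : IntegralExtension α) : ∃ n a, layer n a = p :=
  ⟨_, _, layer_snd_fst p⟩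

theorem layer_le_layer :
    layer n a ≤ layer m b ↔ a ≤ b ∧ (a = b → IsIntegralPoint a ∨ n ≤ m) := by
  classical
  change toLex (a, if IsIntegralPoint a then 0 else n) ≤
    toLex (b, if IsIntegralPoint b then 0 else m) ↔ _
  rw [Prod.Lex.toLex_le_toLex']
  refine and_congr_right fun _ => forall_congr' fun hab => ?_
  obtain rfl : a = b := hab
  by_cases ha : IsIntegralPoint a <;> simp [ha]

theorem layer_lt_layer :
    layer n a < layer m b ↔ a < b ∨ a = b ∧ ¬IsIntegralPoint a ∧ n < m := by
  rw [← not_le, layer_le_layer]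
  grind

theorem layer_monotone (n : ℤ) : Monotone (layer n : α → IntegralExtension α) :=
  fun _ _ hab => layer_le_layer.2 ⟨hab, fun _ => .inr le_rfl⟩

/-- The embedding of a chain into its integral extension at level `0`. -/
noncomputable def embedding : α ↪o IntegralExtension α :=
  OrderEmbedding.ofMapLEIff (layer 0) fun _ _ => by
    simp only [layer_le_layer, le_refl, or_true, implies_true, and_true]

theorem layer_covBy_layer_add_one (ha : ¬IsIntegralPoint a) (n : ℤ) :
    layer n a ⋖ layer (n + 1) a := by
  refine covBy_iff_lt_iff_le_left.2 fun {c} => ?_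
  obtain ⟨k, b, rfl⟩ := exists_layer_eq c
  rw [layer_lt_layer, layer_le_layer, Int.lt_add_one_iff]
  grind

theorem layer_covBy_layer (ha : IsIntegralPoint a) (hb : IsIntegralPoint b) (hab : a ⋖ b)
    (n m : ℤ) : layer n a ⋖ layer m b := by
  refine covBy_iff_lt_iff_le_left.2 fun {c} => ?_
  obtain ⟨k, d, rfl⟩ := exists_layer_eq c
  rw [layer_lt_layer, layer_le_layer, hab.lt_iff_le_left]
  grind

theorem isIntegralChain : IsIntegralChain (IntegralExtension α) := by
  intro p
  obtain ⟨n, a, rfl⟩ := exists_layer_eq p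
  by_cases ha : IsIntegralPoint a
  · obtain ⟨b, hb, hab⟩ := ha.exists_upperCover
    obtain ⟨c, hc, hca⟩ := ha.exists_lowerCover
    exact ⟨⟨_, layer_covBy_layer ha hb hab n 0⟩, ⟨_, layer_covBy_layer hc ha hca 0 n⟩⟩
  · have hpred := layer_covBy_layer_add_one ha (n - 1)
    rw [sub_add_cancel] at hpred
    exact ⟨⟨_, layer_covBy_layer_add_one ha n⟩, ⟨_, hpred⟩⟩

/-- The extension of a self-map of `α` that keeps the level, except that it drops to `0` over
integral values. -/
noncomputable def extend (f : α → α) (p : IntegralExtension α) : IntegralExtension α :=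
  layer (ofLex p.1).2 (f (ofLex p.1).1)

theorem extend_layer (hf : InFF f) (n : ℤ) (a : α) : extend f (layer n a) = layer n (f a) := by
  by_cases ha : IsIntegralPoint a
  · simp [extend, layer, ha, hf.isIntegralPoint_map ha]
  · have hlevel : (ofLex (layer n a).1).2 = n := if_neg ha
    exact congrArg (layer · (f a)) hlevel

theorem extend_id : extend (id : α → α) = id :=
  funext layer_snd_fst

theorem extend_comp (hf : InFF f) : extend (f ∘ h) = extend f ∘ extend h :=
  funext fun _ => (extend_layer hf _ _).symm

theorem extend_max (f h : α → α) :
    extend (fun x => max (f x) (h x)) = fun p => max (extend f p) (extend h p) :=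
  funext fun _ => (layer_monotone _).map_max

theorem extend_min (f h : α → α) :
    extend (fun x => min (f x) (h x)) = fun p => min (extend f p) (extend h p) :=
  funext fun _ => (layer_monotone _).map_min

theorem galoisConnection_extend (hh : InFF h) (hf : InFF f) (hhf : GaloisConnection h f) :
    GaloisConnection (extend h) (extend f) := by
  intro p q
  obtain ⟨n, a, rfl⟩ := exists_layer_eq p
  obtain ⟨m, b, rfl⟩ := exists_layer_eq q
  rw [extend_layer hh, extend_layer hf, layer_le_layer, layer_le_layer, hhf.le_iff_le]
  refine and_congr_right fun _ => ?_
  by_cases hnm : n ≤ m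
  · simp only [hnm, or_true, implies_true]
  simp only [hnm, or_false]
  constructor
  · rintro hb rfl
    exact isIntegralPoint_u hf hhf fun heq => heq ▸ hb heq
  · rintro ha rfl
    exact isIntegralPoint_l hh hhf ha

theorem inFF_extend (hf : InFF f) : InFF (extend f) := by
  obtain ⟨g, rfl, hg⟩ := hf
  have hgF : ∀ n, InFF (g n) := InFF.of_galoisConnection hg
  exact ⟨fun n => extend (g n), rfl, fun n => galoisConnection_extend (hgF _) (hgF _) (hg n)⟩

theorem goodExtension : GoodExtension α (IntegralExtension α) embedding extend :=
  fun f h hf hh => ⟨inFF_extend hf, extend_layer hf 0, extend_comp hf, extend_max f h,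
    extend_min f h, extend_id, galoisConnection_extend hh hf⟩

end IntegralExtension

/-- Cayley/Holland-style embedding: for every chain `Ω` there is an integral chain
`Ω'` and an embedding of `F(Ω)` into `F(Ω')` preserving all the structure. -/
theorem stmt_12 (Ω : Type u) [LinearOrder Ω] :
    ∃ (Ω' : Type u) (inst : LinearOrder Ω')
      (ι : @OrderEmbedding Ω Ω' _ inst.toLE) (Φ : (Ω → Ω) → Ω' → Ω'),
      @IsIntegralChain Ω' inst ∧ @GoodExtension Ω _ Ω' inst ι Φ := by
  exact ⟨IntegralExtension Ω, inferInstance, IntegralExtension.embedding,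
    IntegralExtension.extend, IntegralExtension.isIntegralChain, IntegralExtension.goodExtension⟩
end

section
/- Let Δ be a finite linear order, let Y be a binary relation on Δ such that Y(a, b) implies a is covered by b, and let G be a binary relation on Δ that is an order-preserving partial function: G(x, u) and G(x, v) imply u = v, and G(x, u), G(y, v) with x ≤ y imply u ≤ v. Define the relation Gℓ on Δ by: Gℓ(x, b) iff there exist c, a, d ∈ Δ with G(b, c), G(a, d), Y(a, b), and d < x ≤ c. Then Gℓ is an order-preserving partial function: Gℓ(x, b) and Gℓ(x, b′) imply b = b′, and Gℓ(x, b), Gℓ(y, b′) with x ≤ y imply b ≤ b′. -/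
section

variable {α β : Type*}

/-- Order preservation for a relation `G`, thought of as a partial function `g` by reading `G x u`
as `g x = u`. -/
def IsMonotoneRel [LE α] [LE β] (G : α → β → Prop) : Prop :=
  ∀ ⦃x y u v⦄, G x u → G y v → x ≤ y → u ≤ v

/-- The relation `g^[ℓ]` of a partial function `g` with graph `G`, relative to a relation `Y` on its
source. If `g` is order-preserving and `Y` is contained in the covering relation of a chain, it is a
restriction of the lower adjoint `x ↦ min {b | x ≤ g b}`: the minimality of `b` is witnessed by a
`Y`-predecessor `a` with `g a < x`. -/
def LowerAdjointRel [Preorder β] (Y : α → α → Prop) (G : α → β → Prop) (x : β) (b : α) : Prop :=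
  ∃ c a d, G b c ∧ G a d ∧ Y a b ∧ d < x ∧ x ≤ c

namespace IsMonotoneRel

theorem rightUnique [Preorder α] [PartialOrder β] {G : α → β → Prop} (hG : IsMonotoneRel G) :
    Relator.RightUnique G :=
  fun _ _ _ hu hv => (hG hu hv le_rfl).antisymm (hG hv hu le_rfl)

theorem lowerAdjointRel [LinearOrder α] [Preorder β] {Y : α → α → Prop} {G : α → β → Prop}
    (hG : IsMonotoneRel G) (hY : ∀ a b, Y a b → a ⋖ b) :
    IsMonotoneRel (LowerAdjointRel Y G) := by
  rintro x y b b' ⟨-, a, d, -, had, hab, hdx, -⟩ ⟨c', -, -, hbc', -, -, -, hyc'⟩ hxy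
  by_contra! hlt
  have hb'a : b' ≤ a := (hY a b hab).le_of_lt hlt
  have hdd : d < d := calc
    d < x := hdx
    _ ≤ y := hxy
    _ ≤ c' := hyc'
    _ ≤ d := hG hbc' had hb'a
  exact hdd.false

end IsMonotoneRel

theorem stmt_13_general [LinearOrder α] [Preorder β] {Y : α → α → Prop} {G : α → β → Prop}
    (hY : ∀ a b, Y a b → a ⋖ b) (hG : IsMonotoneRel G) :
    Relator.RightUnique (LowerAdjointRel Y G) ∧ IsMonotoneRel (LowerAdjointRel Y G) :=
  have hmono := hG.lowerAdjointRel hY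
  ⟨hmono.rightUnique, hmono⟩

end

/-- For an order-preserving partial function `G` on a finite c-chain `(Δ, ≤, Y)`,
the relation `Gℓ` is an order-preserving partial function. -/
theorem stmt_13 {Δ : Type*} [LinearOrder Δ] [Finite Δ]
    (Y : Δ → Δ → Prop) (hY : ∀ a b, Y a b → a ⋖ b)
    (G : Δ → Δ → Prop)
    (hGfun : ∀ x u v, G x u → G x v → u = v)
    (hGmono : ∀ x y u v, G x u → G y v → x ≤ y → u ≤ v) :
    ∀ Gl : Δ → Δ → Prop,
      (Gl = fun x b => ∃ c a d, G b c ∧ G a d ∧ Y a b ∧ d < x ∧ x ≤ c) →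
      (∀ x b b', Gl x b → Gl x b' → b = b') ∧
      (∀ x y b b', Gl x b → Gl y b' → x ≤ y → b ≤ b') := by
  rintro _ rfl
  exact stmt_13_general hY hGmono
end

section
/- Let f : ℤ → ℤ be monotone and suppose that for every a in the range of f there exist b, c ∈ ℤ with f⁻¹{a} equal to the closed interval [b, c]. Then f is residuated and dually residuated, and consequently f has residuals and dual residuals of all orders (f ∈ F(ℤ)): there exists a family g : ℤ → (ℤ → ℤ) with g(0) = f such that for every n ∈ ℤ, (g(n+1), g(n)) is a Galois connection. -/
/-!
On `ℤ` the maps having a residual are exactly the monotone maps whose range is unbounded in both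
directions, and so are the maps having a dual residual. Such a map has a residual because every
set `{a | f a ≤ b}` is nonempty and bounded above, hence has a greatest element, and dually.
Conversely, both members of a Galois connection have unbounded range, so (dual) residuals can be
taken again and again. If all nonempty fibres of a monotone `f` are bounded, then `f` takes no
largest and no smallest value, so its range is unbounded.
-/

open Set OrderDual

variable {α β : Type*}

/-- A monotone map whose range is unbounded above and below. On `ℤ` these are the maps in `F(ℤ)`:
the class is closed under taking residuals and dual residuals. -/
structure UnboundedMonotone [Preorder α] [Preorder β] (f : α → β) : Prop where
  monotone : Monotone f
  not_bddAbove_range : ¬BddAbove (range f)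
  not_bddBelow_range : ¬BddBelow (range f)

namespace UnboundedMonotone

section Preorder

variable [Preorder α] [Preorder β] {l : α → β} {u : β → α}

theorem dual {f : α → β} (hf : UnboundedMonotone f) :
    UnboundedMonotone (toDual ∘ f ∘ ofDual) :=
  ⟨hf.monotone.dual, hf.not_bddBelow_range, hf.not_bddAbove_range⟩

theorem of_galoisConnection_u [NoTopOrder α] [NoBotOrder β] (gc : GaloisConnection l u) :
    UnboundedMonotone u where
  monotone := gc.monotone_u
  not_bddAbove_range := fun ⟨m, hm⟩ =>
    not_isTop m fun a => (gc.le_u_l a).trans (hm (mem_range_self (l a)))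
  not_bddBelow_range := fun ⟨m, hm⟩ =>
    not_isBot (l m) fun b => gc.l_le (hm (mem_range_self b))

theorem of_galoisConnection_l [NoTopOrder α] [NoBotOrder β] (gc : GaloisConnection l u) :
    UnboundedMonotone l :=
  (of_galoisConnection_u gc.dual).dual

end Preorder

section LinearOrder

variable [LinearOrder α] [LinearOrder β] {f : α → β}

theorem exists_isGreatest_setOf_le [SuccOrder α] [IsSuccArchimedean α]
    (hf : UnboundedMonotone f) (b : β) : ∃ m, IsGreatest {a | f a ≤ b} m := by
  obtain ⟨_, ⟨lo, rfl⟩, hlo⟩ := not_bddBelow_iff.1 hf.not_bddBelow_range b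
  obtain ⟨_, ⟨hi, rfl⟩, hhi⟩ := not_bddAbove_iff.1 hf.not_bddAbove_range b
  have hbdd : BddAbove {a | f a ≤ b} :=
    ⟨hi, fun _ ha => (hf.monotone.reflect_lt (lt_of_le_of_lt ha hhi)).le⟩
  exact hbdd.exists_isGreatest_of_nonempty ⟨lo, hlo.le⟩

theorem exists_residual [SuccOrder α] [IsSuccArchimedean α] (hf : UnboundedMonotone f) :
    ∃ u : β → α, GaloisConnection f u := by
  choose u hu using hf.exists_isGreatest_setOf_le
  exact ⟨u, fun _ b => ⟨fun h => (hu b).2 h, fun h => (hf.monotone h).trans (hu b).1⟩⟩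

theorem exists_dual_residual [PredOrder α] [IsPredArchimedean α] (hf : UnboundedMonotone f) :
    ∃ l : β → α, GaloisConnection l f :=
  let ⟨l, gc⟩ := hf.dual.exists_residual
  ⟨ofDual ∘ l ∘ toDual, gc.dual⟩

end LinearOrder

end UnboundedMonotone

theorem exists_int_chain {r : α → α → Prop} (hleft : ∀ x, ∃ y, r y x) (hright : ∀ x, ∃ y, r x y)
    (x : α) : ∃ g : ℤ → α, g 0 = x ∧ ∀ n, r (g (n + 1)) (g n) := by
  choose left hleft using hleft
  choose right hright using hright
  let g : ℤ → α
    | .ofNat n => left^[n] x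
    | .negSucc n => right^[n + 1] x
  refine ⟨g, rfl, fun n => ?_⟩
  match n with
  | .ofNat n =>
    change r (left^[n + 1] x) (left^[n] x)
    rw [Function.iterate_succ_apply']
    exact hleft _
  | .negSucc 0 => exact hright x
  | .negSucc (n + 1) =>
    change r (right^[n + 1] x) (right^[n + 2] x)
    rw [Function.iterate_succ_apply' right (n + 1)]
    exact hright _

theorem UnboundedMonotone.exists_galoisConnection_chain [LinearOrder α] [SuccOrder α]
    [IsSuccArchimedean α] [PredOrder α] [NoTopOrder α] [NoBotOrder α]
    {f : α → α} (hf : UnboundedMonotone f) :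
    ∃ g : ℤ → α → α, g 0 = f ∧ ∀ n, GaloisConnection (g (n + 1)) (g n) := by
  obtain ⟨g, hg_zero, hg⟩ := exists_int_chain
    (r := fun h k : {h : α → α // UnboundedMonotone h} => GaloisConnection h.1 k.1)
    (fun h => let ⟨l, gc⟩ := h.2.exists_dual_residual; ⟨⟨l, of_galoisConnection_l gc⟩, gc⟩)
    (fun h => let ⟨u, gc⟩ := h.2.exists_residual; ⟨⟨u, of_galoisConnection_u gc⟩, gc⟩)
    ⟨f, hf⟩
  exact ⟨fun n => (g n).1, congrArg Subtype.val hg_zero, hg⟩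

section BoundedFibers

variable [Preorder α] [LinearOrder β] {f : α → β}

theorem not_bddAbove_range_of_bddAbove_fibers [Nonempty α] [NoMaxOrder α] [SuccOrder β]
    [IsSuccArchimedean β] (hf : Monotone f) (hfib : ∀ b ∈ range f, BddAbove (f ⁻¹' {b})) :
    ¬BddAbove (range f) := by
  intro hbdd
  obtain ⟨_, ⟨x, rfl⟩, hmax⟩ := hbdd.exists_isGreatest_of_nonempty (range_nonempty f)
  have hIci : Ici x ⊆ f ⁻¹' {f x} := fun y hxy =>
    le_antisymm (hmax (mem_range_self y)) (hf hxy)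
  exact not_bddAbove_Ici x ((hfib (f x) (mem_range_self x)).mono hIci)

theorem not_bddBelow_range_of_bddBelow_fibers [Nonempty α] [NoMinOrder α] [PredOrder β]
    [IsPredArchimedean β] (hf : Monotone f) (hfib : ∀ b ∈ range f, BddBelow (f ⁻¹' {b})) :
    ¬BddBelow (range f) :=
  not_bddAbove_range_of_bddAbove_fibers hf.dual hfib

end BoundedFibers

/-- A monotone `f : ℤ → ℤ` whose preimages of range points are closed intervals is
residuated and dually residuated, and hence belongs to `F(ℤ)`. -/
theorem stmt_15 (f : ℤ → ℤ) (hmono : Monotone f)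
    (h1 : ∀ a ∈ Set.range f, ∃ b c : ℤ, f ⁻¹' {a} = Set.Icc b c) :
    ((∃ fr : ℤ → ℤ, GaloisConnection f fr) ∧ (∃ fl : ℤ → ℤ, GaloisConnection fl f)) ∧
      ∃ g : ℤ → ℤ → ℤ, g 0 = f ∧ ∀ n : ℤ, GaloisConnection (g (n + 1)) (g n) := by
  have hfib_above : ∀ a ∈ range f, BddAbove (f ⁻¹' {a}) := fun a ha =>
    let ⟨_, _, h⟩ := h1 a ha
    h ▸ bddAbove_Icc
  have hfib_below : ∀ a ∈ range f, BddBelow (f ⁻¹' {a}) := fun a ha =>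
    let ⟨_, _, h⟩ := h1 a ha
    h ▸ bddBelow_Icc
  have hf : UnboundedMonotone f :=
    ⟨hmono, not_bddAbove_range_of_bddAbove_fibers hmono hfib_above,
      not_bddBelow_range_of_bddBelow_fibers hmono hfib_below⟩
  exact ⟨⟨hf.exists_residual, hf.exists_dual_residual⟩, hf.exists_galoisConnection_chain⟩
end

section
/- Let q ∈ ℤ with 1 ≤ q, let D be a subset of the interval [1, q] ⊆ ℤ, and let g : ℤ → ℤ satisfy g(x) ∈ [1, q] for all x ∈ D and be order-preserving on D (x, y ∈ D with x ≤ y imply g(x) ≤ g(y)). Then there exists a monotone function f : ℤ → ℤ such that f(n) = n for all n ∉ [1, q], f(x) = g(x) for all x ∈ D, and f is residuated and dually residuated. -/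
/-!
Extend `g` monotonically to the whole line with values clamped to `[1, q]`, and switch to the
identity outside `[1, q]`; since `[1, q]` is order-convex, the glued map `f` is still monotone.
Being the identity near `±∞`, `f` tends to `±∞` at `±∞`, so each set `{x | f x ≤ y}` is nonempty
and bounded above. In `ℤ` such a set has a greatest element, which is the value at `y` of the
residual. The dual residual arises in the same way in the opposite order.
-/

open Filter Set

section Extension

variable {α : Type*}

theorem exists_monotone_extension_mem_Icc {β : Type*} [LinearOrder α]
    [ConditionallyCompleteLinearOrder β] {g : α → β} {D : Set α} {a b : β} (hab : a ≤ b)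
    (hg : MonotoneOn g D) (hmaps : MapsTo g D (Icc a b)) :
    ∃ h : α → β, Monotone h ∧ EqOn h g D ∧ ∀ x, h x ∈ Icc a b := by
  have hbelow : BddBelow (g '' D) := bddBelow_Icc.mono hmaps.image_subset
  have habove : BddAbove (g '' D) := bddAbove_Icc.mono hmaps.image_subset
  obtain ⟨h, hmono, heq⟩ := hg.exists_monotone_extension hbelow habove
  refine ⟨fun x ↦ max a (min b (h x)), monotone_const.max (monotone_const.min hmono),
    fun x hx ↦ ?_, fun x ↦ ⟨le_max_left _ _, max_le hab (min_le_left _ _)⟩⟩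
  simp only [← heq hx, min_eq_right (hmaps hx).2, max_eq_right (hmaps hx).1]

theorem monotone_piecewise_id_of_ordConnected [LinearOrder α] {f : α → α} {s : Set α}
    [DecidablePred (· ∈ s)] (hs : s.OrdConnected) (hf : MonotoneOn f s) (hmaps : MapsTo f s s) :
    Monotone (s.piecewise f id) := by
  intro x y hxy
  by_cases hx : x ∈ s <;> by_cases hy : y ∈ s <;>
    simp only [piecewise_eq_of_mem, piecewise_eq_of_notMem, hx, hy, not_false_eq_true, id_eq]
  · exact hf hx hy hxy
  · by_contra! hlt
    exact hy (hs.out hx (hmaps hx) ⟨hxy, hlt.le⟩)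
  · by_contra! hlt
    exact hx (hs.out (hmaps hy) hy ⟨hlt.le, hxy⟩)
  · exact hxy

theorem exists_monotone_extension_eqOn_id_compl_Icc [ConditionallyCompleteLinearOrder α]
    {g : α → α} {D : Set α} {a b : α} (hab : a ≤ b) (hD : D ⊆ Icc a b) (hg : MonotoneOn g D)
    (hmaps : MapsTo g D (Icc a b)) :
    ∃ f : α → α, Monotone f ∧ EqOn f id (Icc a b)ᶜ ∧ EqOn f g D := by
  obtain ⟨h, hmono, heq, hmem⟩ := exists_monotone_extension_mem_Icc hab hg hmaps
  exact ⟨(Icc a b).piecewise h id,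
    monotone_piecewise_id_of_ordConnected ordConnected_Icc (hmono.monotoneOn _) fun x _ ↦ hmem x,
    piecewise_eqOn_compl _ _ _, ((piecewise_eqOn _ _ _).mono hD).trans heq⟩

end Extension

section Residuation

theorem exists_upperAdjoint_of_isGreatest {α β : Type*} [Preorder α] [Preorder β] {f : α → β}
    (hf : Monotone f) (hgreatest : ∀ y, ∃ x, IsGreatest {x | f x ≤ y} x) :
    ∃ u, GaloisConnection f u := by
  choose u hu using hgreatest
  exact ⟨u, fun x y ↦ ⟨fun hxy ↦ (hu y).2 hxy, fun hxy ↦ (hf hxy).trans (hu y).1⟩⟩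

variable {α β : Type*} [LinearOrder α] [Preorder β] {f : α → β}

theorem exists_upperAdjoint_of_tendsto [Nonempty α] [SuccOrder α] [IsSuccArchimedean α]
    [NoMaxOrder β] (hf : Monotone f) (hbot : Tendsto f atBot atBot)
    (htop : Tendsto f atTop atTop) : ∃ u, GaloisConnection f u := by
  refine exists_upperAdjoint_of_isGreatest hf fun y ↦ ?_
  have hne : {x | f x ≤ y}.Nonempty := (hbot.eventually_le_atBot y).exists
  obtain ⟨b, hb⟩ := (htop.eventually_gt_atTop y).exists
  have hbdd : BddAbove {x | f x ≤ y} :=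
    ⟨b, fun x hx ↦ (hf.reflect_lt (hx.trans_lt hb)).le⟩
  exact hbdd.exists_isGreatest_of_nonempty hne

theorem exists_lowerAdjoint_of_tendsto [Nonempty α] [PredOrder α] [IsPredArchimedean α]
    [NoMinOrder β] (hf : Monotone f) (hbot : Tendsto f atBot atBot)
    (htop : Tendsto f atTop atTop) : ∃ l, GaloisConnection l f := by
  obtain ⟨u, hu⟩ := exists_upperAdjoint_of_tendsto (α := αᵒᵈ) (β := βᵒᵈ) hf.dual htop hbot
  exact ⟨u, hu.dual⟩

end Residuation

section IdentityOutsideInterval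

variable {α : Type*} [Preorder α] {f : α → α} {a b : α}

theorem tendsto_atTop_of_eqOn_id_compl_Icc [NoMaxOrder α]
    (hf : EqOn f id (Icc a b)ᶜ) : Tendsto f atTop atTop := by
  refine tendsto_id.congr' ?_
  filter_upwards [eventually_gt_atTop b] with x hx
  exact (hf fun hmem ↦ hx.not_ge hmem.2).symm

theorem tendsto_atBot_of_eqOn_id_compl_Icc [NoMinOrder α]
    (hf : EqOn f id (Icc a b)ᶜ) : Tendsto f atBot atBot := by
  refine tendsto_id.congr' ?_
  filter_upwards [eventually_lt_atBot a] with x hx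
  exact (hf fun hmem ↦ hx.not_ge hmem.1).symm

end IdentityOutsideInterval

/-- An order-preserving partial function `g` defined on a subset of `[1, q] ⊆ ℤ` with
values in `[1, q]` extends to a monotone, residuated and dually residuated function
on `ℤ` that is the identity outside `[1, q]`. -/
theorem stmt_16 (q : ℤ) (hq : 1 ≤ q) (D : Set ℤ) (hD : D ⊆ Set.Icc 1 q)
    (g : ℤ → ℤ) (hg1 : ∀ x ∈ D, g x ∈ Set.Icc 1 q)
    (hg2 : ∀ x ∈ D, ∀ y ∈ D, x ≤ y → g x ≤ g y) :
    ∃ f : ℤ → ℤ, Monotone f ∧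
      (∀ n : ℤ, n ∉ Set.Icc 1 q → f n = n) ∧
      (∀ x ∈ D, f x = g x) ∧
      (∃ fr : ℤ → ℤ, GaloisConnection f fr) ∧
      (∃ fl : ℤ → ℤ, GaloisConnection fl f) := by
  have hg : MonotoneOn g D := fun x hx y hy hxy ↦ hg2 x hx y hy hxy
  obtain ⟨f, hmono, hid, hext⟩ := exists_monotone_extension_eqOn_id_compl_Icc hq hD hg hg1
  have htop : Tendsto f atTop atTop := tendsto_atTop_of_eqOn_id_compl_Icc hid
  have hbot : Tendsto f atBot atBot := tendsto_atBot_of_eqOn_id_compl_Icc hid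
  exact ⟨f, hmono, fun n hn ↦ hid hn, fun x hx ↦ hext hx,
    exists_upperAdjoint_of_tendsto hmono hbot htop,
    exists_lowerAdjoint_of_tendsto hmono hbot htop⟩
end
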